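/- arXiv:math/9912170 — 2 statements merged into one kernel-verified Lean document; each statement's English description precedes it below -/
import Mathlib

section
/- For every complex number s, the integral ∫₀^∞ y^{s−1} H(y) dy converges absolutely and equals 2ξ(s), where ξ is the unique entire function satisfying ξ(s) = (1/2) s(s−1) π^{−s/2} Γ(s/2) ζ(s) for Re(s) > 1. -/
open MeasureTheory

/-- `H(y) = 4y² ∑_{n=1}^∞ (2π²n⁴y² − 3πn²) exp(−πn²y²)`. -/
noncomputable def H (y : ℝ) : ℝ :=
  4 * y ^ 2 * ∑' n : ℕ,
    (2 * Real.pi ^ 2 * ((n : ℝ) + 1) ^ 4 * y ^ 2 - 3 * Real.pi * ((n : ℝ) + 1) ^ 2) *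
      Real.exp (-Real.pi * ((n : ℝ) + 1) ^ 2 * y ^ 2)

/-!
Let `D = y d/dy` and `θ(y) = 1 + 2 ∑ exp(-π n² y²)`, so that `H = D²θ + Dθ` termwise. Since `D`
anticommutes with the inversion `y ↦ 1/y`, applying `D + D²` to `θ(1/y) = y θ(y)` gives
`H(1/y) = y H(y)`. The constant term of `θ` is killed by `D`, so `H` decays rapidly at infinity,
hence also at `0`, and its Mellin transform converges everywhere and is entire. For `Re s > 1`
Müntz's formula `∫ y^(s-1) ∑ f(n y) dy = ζ(s) ∫ y^(s-1) f(y) dy` evaluates it, and the identity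
theorem extends the result to all `s`.
-/

open Set Filter Asymptotics Topology

section EulerDerivative

variable {E : Type*} [NormedAddCommGroup E] [NormedSpace ℝ E] {f f₁ f₂ g g₁ : ℝ → E}

/-- `HasEulerDeriv f f₁` says that `f₁` is the image of `f` under the Euler operator
`y d/dy` on the half-line `y > 0`. Unlike `d/dy`, this operator commutes with dilations. -/
def HasEulerDeriv (f f₁ : ℝ → E) : Prop :=
  ∀ y, 0 < y → HasDerivAt f (y⁻¹ • f₁ y) y

namespace HasEulerDeriv

lemma continuousOn (hf : HasEulerDeriv f f₁) : ContinuousOn f (Ioi 0) :=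
  fun y hy => (hf y hy).continuousAt.continuousWithinAt

lemma unique (hf : HasEulerDeriv f f₁) (hg : HasEulerDeriv g g₁) (h : EqOn f g (Ioi 0)) :
    EqOn f₁ g₁ (Ioi 0) := by
  intro y hy
  have hfg : f =ᶠ[𝓝 y] g := h.eventuallyEq_of_mem (Ioi_mem_nhds hy)
  have hderiv := ((hf y hy).congr_of_eventuallyEq hfg.symm).unique (hg y hy)
  exact smul_right_injective E (inv_ne_zero (ne_of_gt hy)) hderiv

lemma congr_right (hf : HasEulerDeriv f f₁) (h : EqOn f₁ g₁ (Ioi 0)) : HasEulerDeriv f g₁ :=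
  fun y hy => by simpa only [h hy] using hf y hy

lemma const_add (hf : HasEulerDeriv f f₁) (c : E) : HasEulerDeriv (fun y => c + f y) f₁ :=
  fun y hy => (hf y hy).const_add c

lemma neg (hf : HasEulerDeriv f f₁) : HasEulerDeriv (fun y => -f y) (fun y => -f₁ y) :=
  fun y hy => by simpa only [smul_neg] using (hf y hy).fun_neg

lemma add (hf : HasEulerDeriv f f₁) (hg : HasEulerDeriv g g₁) :
    HasEulerDeriv (fun y => f y + g y) (fun y => f₁ y + g₁ y) :=
  fun y hy => by simpa only [smul_add] using (hf y hy).fun_add (hg y hy)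

lemma const_smul (hf : HasEulerDeriv f f₁) (c : ℝ) :
    HasEulerDeriv (fun y => c • f y) (fun y => c • f₁ y) :=
  fun y hy => by simpa only [smul_comm c] using (hf y hy).fun_const_smul c

lemma id_smul (hf : HasEulerDeriv f f₁) :
    HasEulerDeriv (fun y => y • f y) (fun y => y • (f y + f₁ y)) := by
  intro y hy
  refine ((hasDerivAt_id y).fun_smul (hf y hy)).congr_deriv ?_
  rw [id, smul_inv_smul₀ hy.ne', inv_smul_smul₀ hy.ne', one_smul, add_comm]

lemma comp_inv (hf : HasEulerDeriv f f₁) :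
    HasEulerDeriv (fun y => f y⁻¹) (fun y => -f₁ y⁻¹) := by
  intro y hy
  refine ((hf y⁻¹ (inv_pos.2 hy)).scomp y (hasDerivAt_inv hy.ne')).congr_deriv ?_
  rw [inv_inv, smul_smul, smul_neg, ← neg_smul]
  congr 1
  field_simp

lemma add_comp_inv_of_comp_inv_eq_smul (hf : HasEulerDeriv f f₁) (hf₁ : HasEulerDeriv f₁ f₂)
    (hinv : ∀ y, 0 < y → f y⁻¹ = y • f y) {y : ℝ} (hy : 0 < y) :
    f₁ y⁻¹ + f₂ y⁻¹ = y • (f₁ y + f₂ y) := by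
  have h₁ : EqOn (fun y => -f₁ y⁻¹) (fun y => y • (f y + f₁ y)) (Ioi 0) :=
    hf.comp_inv.unique hf.id_smul hinv
  have h₂ : EqOn (fun y => - -f₂ y⁻¹) (fun y => y • (f y + f₁ y + (f₁ y + f₂ y))) (Ioi 0) :=
    hf₁.comp_inv.neg.unique (hf.add hf₁).id_smul h₁
  have hf₁_inv : f₁ y⁻¹ = -(y • (f y + f₁ y)) := neg_eq_iff_eq_neg.1 (h₁ hy)
  have hf₂_inv : f₂ y⁻¹ = y • (f y + f₁ y + (f₁ y + f₂ y)) := by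
    simpa only [neg_neg] using h₂ hy
  rw [hf₁_inv, hf₂_inv]
  module

end HasEulerDeriv

end EulerDerivative

section DilationSum

variable {E : Type*} [NormedAddCommGroup E] {f : ℝ → E} {p : ℝ}

/-- The sum `∑ f(n y)` over `n ≥ 1` of the integral dilates of `f`, as in Müntz's formula. -/
noncomputable def dilationSum (f : ℝ → E) (y : ℝ) : E :=
  ∑' n : ℕ, f (((n : ℝ) + 1) * y)

lemma summable_nat_add_one_rpow_neg (hp : 1 < p) :
    Summable fun n : ℕ => ((n : ℝ) + 1) ^ (-p) := by
  simpa using (summable_nat_add_iff 1).2 (Real.summable_nat_rpow.2 (neg_lt_neg hp))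

lemma exists_norm_dilate_le (hf : f =O[𝓟 (Ioi 0)] fun y => y ^ (-p)) :
    ∃ C, 0 ≤ C ∧ ∀ (n : ℕ) (y : ℝ), 0 < y →
      ‖f (((n : ℝ) + 1) * y)‖ ≤ C * ((n : ℝ) + 1) ^ (-p) * y ^ (-p) := by
  obtain ⟨C, hC, hbound⟩ := hf.exists_nonneg
  rw [isBigOWith_principal] at hbound
  refine ⟨C, hC, fun n y hy => ?_⟩
  have hn : 0 ≤ (n : ℝ) + 1 := n.cast_add_one_pos.le
  have hny : 0 < ((n : ℝ) + 1) * y := by positivity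
  have h := hbound _ hny
  rwa [Real.norm_of_nonneg (by positivity), Real.mul_rpow hn hy.le, ← mul_assoc] at h

lemma exists_summable_norm_dilate_le (hp : 1 < p) (hf : f =O[𝓟 (Ioi 0)] fun y => y ^ (-p))
    {c : ℝ} (hc : 0 < c) :
    ∃ u : ℕ → ℝ, Summable u ∧ ∀ (n : ℕ) (y : ℝ), c ≤ y → ‖f (((n : ℝ) + 1) * y)‖ ≤ u n := by
  obtain ⟨C, hC, hbound⟩ := exists_norm_dilate_le hf
  refine ⟨fun n => C * ((n : ℝ) + 1) ^ (-p) * c ^ (-p),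
    ((summable_nat_add_one_rpow_neg hp).mul_left C).mul_right _, fun n y hy => ?_⟩
  refine (hbound n y (hc.trans_le hy)).trans ?_
  exact mul_le_mul_of_nonneg_left (Real.rpow_le_rpow_of_nonpos hc hy (by linarith))
    (by positivity)

lemma summable_dilate [CompleteSpace E] (hp : 1 < p) (hf : f =O[𝓟 (Ioi 0)] fun y => y ^ (-p))
    {y : ℝ} (hy : 0 < y) : Summable fun n : ℕ => f (((n : ℝ) + 1) * y) := by
  obtain ⟨u, hu, hbound⟩ := exists_summable_norm_dilate_le hp hf hy
  exact hu.of_norm_bounded fun n => hbound n y le_rfl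

lemma isBigO_dilationSum (hp : 1 < p) (hf : f =O[𝓟 (Ioi 0)] fun y => y ^ (-p)) :
    dilationSum f =O[𝓟 (Ioi 0)] fun y => y ^ (-p) := by
  obtain ⟨C, -, hbound⟩ := exists_norm_dilate_le hf
  refine isBigO_principal.2 ⟨∑' n : ℕ, C * ((n : ℝ) + 1) ^ (-p), fun y hy => ?_⟩
  have hsum := ((summable_nat_add_one_rpow_neg hp).mul_left C).hasSum.mul_right (y ^ (-p))
  rw [Real.norm_of_nonneg (Real.rpow_nonneg (le_of_lt hy) _)]
  exact tsum_of_norm_bounded hsum fun n => hbound n y hy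

lemma HasEulerDeriv.dilationSum [NormedSpace ℝ E] [CompleteSpace E] {f₁ : ℝ → E}
    (h : HasEulerDeriv f f₁) (hp : 1 < p) (hf : f =O[𝓟 (Ioi 0)] fun y => y ^ (-p))
    (hf₁ : f₁ =O[𝓟 (Ioi 0)] fun y => y ^ (-p)) :
    HasEulerDeriv (dilationSum f) (dilationSum f₁) := by
  intro y hy
  have hy2 : 0 < y / 2 := half_pos hy
  obtain ⟨u, hu, hbound⟩ := exists_summable_norm_dilate_le hp hf₁ hy2
  have hderiv (n : ℕ) (z : ℝ) (hz : z ∈ Ioi (y / 2)) :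
      HasDerivAt (fun z => f (((n : ℝ) + 1) * z)) (z⁻¹ • f₁ (((n : ℝ) + 1) * z)) z := by
    have hz0 : 0 < z := hy2.trans hz
    refine ((h _ (by positivity)).scomp z
      ((hasDerivAt_id z).const_mul ((n : ℝ) + 1))).congr_deriv ?_
    rw [smul_smul, id]
    congr 1
    field_simp
  have hle (n : ℕ) (z : ℝ) (hz : z ∈ Ioi (y / 2)) :
      ‖z⁻¹ • f₁ (((n : ℝ) + 1) * z)‖ ≤ (y / 2)⁻¹ * u n := by
    rw [norm_smul, Real.norm_of_nonneg (inv_nonneg.2 (hy2.trans hz).le)]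
    gcongr
    · exact le_of_lt hz
    · exact hbound n z (le_of_lt hz)
  have hmem : y ∈ Ioi (y / 2) := half_lt_self hy
  refine (hasDerivAt_tsum_of_isPreconnected (hu.mul_left _) isOpen_Ioi isPreconnected_Ioi
    hderiv hle hmem (summable_dilate hp hf hy) hmem).congr_deriv ?_
  exact tsum_const_smul'' y⁻¹

variable [NormedSpace ℂ E] {s : ℂ}

lemma integral_norm_cpow_smul_comp_mul_left {a : ℝ} (ha : 0 < a) :
    ∫ t in Ioi (0 : ℝ), ‖(t : ℂ) ^ (s - 1) • f (a * t)‖ =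
      a ^ (-s.re) * ∫ t in Ioi (0 : ℝ), ‖(t : ℂ) ^ (s - 1) • f t‖ := by
  have hscale : EqOn (fun t : ℝ => ‖(t : ℂ) ^ (s - 1) • f (a * t)‖)
      (fun t => a ^ (1 - s.re) * ‖((a * t : ℝ) : ℂ) ^ (s - 1) • f (a * t)‖) (Ioi 0) := by
    intro t ht
    have ht : 0 < t := ht
    simp only [norm_smul, Complex.norm_cpow_eq_rpow_re_of_pos ht,
      Complex.norm_cpow_eq_rpow_re_of_pos (mul_pos ha ht), Complex.sub_re, Complex.one_re]
    rw [Real.mul_rpow ha.le ht.le, ← mul_assoc, ← mul_assoc, ← Real.rpow_add ha]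
    simp
  rw [setIntegral_congr_fun measurableSet_Ioi hscale, integral_const_mul,
    integral_comp_mul_left_Ioi (fun t : ℝ => ‖(t : ℂ) ^ (s - 1) • f t‖) 0 ha, mul_zero,
    smul_eq_mul, ← mul_assoc, ← Real.rpow_neg_one, ← Real.rpow_add ha]
  ring_nf

theorem mellin_dilationSum (hs : 1 < s.re) (hf : MellinConvergent f s) :
    mellin (dilationSum f) s = riemannZeta s • mellin f s := by
  have hpos (n : ℕ) : 0 < (n : ℝ) + 1 := n.cast_add_one_pos
  have hsum : HasSum (fun n : ℕ => mellin (fun t => f (((n : ℝ) + 1) * t)) s)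
      (∫ t in Ioi (0 : ℝ), ∑' n : ℕ, (t : ℂ) ^ (s - 1) • f (((n : ℝ) + 1) * t)) := by
    refine hasSum_integral_of_summable_integral_norm
      (fun n => (MellinConvergent.comp_mul_left (hpos n)).2 hf) ?_
    simp_rw [integral_norm_cpow_smul_comp_mul_left (hpos _)]
    exact (summable_nat_add_one_rpow_neg hs).mul_right _
  have hzeta : HasSum (fun n : ℕ => (((n : ℝ) + 1 : ℝ) : ℂ) ^ (-s)) (riemannZeta s) := by
    have hsummable := (summable_nat_add_iff 1).2 (Complex.summable_one_div_nat_cpow.2 hs)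
    rw [zeta_eq_tsum_one_div_nat_add_one_cpow hs]
    simpa [Complex.cpow_neg] using hsummable.hasSum
  simp_rw [mellin_comp_mul_left f s (hpos _), tsum_const_smul''] at hsum
  exact hsum.unique (hzeta.smul_const _)

end DilationSum

section Gaussian

variable {b : ℝ} (k : ℕ)

lemma isBigO_pow_mul_exp_neg_mul_sq (hb : 0 < b) {p : ℝ} (hp : -(k : ℝ) ≤ p) :
    (fun y => y ^ k * Real.exp (-b * y ^ 2)) =O[𝓟 (Ioi 0)] fun y => y ^ (-p) := by
  set F : ℝ → ℝ := fun y => y ^ (k + p) * Real.exp (-b * y ^ 2) with hF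
  have hcont : Continuous F :=
    (Real.continuous_rpow_const (by linarith)).mul (by fun_prop)
  have htop : F =O[atTop] fun _ => (1 : ℝ) :=
    (rpow_mul_exp_neg_mul_sq_isLittleO_exp_neg hb _).isBigO.trans
      (IsBigO.of_bound 1 ((eventually_ge_atTop 0).mono fun y hy => by simp [hy]))
  obtain ⟨C, hC⟩ := htop.bound
  obtain ⟨A, hA⟩ := eventually_atTop.1 hC
  have hfar : F =O[𝓟 (Ici A)] fun _ => (1 : ℝ) := isBigO_principal.2 ⟨C, hA⟩
  have hnear : F =O[𝓟 (Icc 0 A)] fun _ => (1 : ℝ) :=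
    hcont.continuousOn.isBigO_principal isCompact_Icc (by simp)
  have hcover : 𝓟 (Ioi 0) ≤ 𝓟 (Icc 0 A) ⊔ 𝓟 (Ici A) := by
    rw [sup_principal, principal_mono]
    exact fun y hy => (le_total y A).imp (fun h => ⟨le_of_lt hy, h⟩) id
  refine (((hnear.sup hfar).mono hcover).mul (isBigO_refl (fun y => y ^ (-p)) _)).congr' ?_ ?_
  · refine eventuallyEq_principal.2 fun y (hy : 0 < y) => ?_
    simp only [hF]
    rw [mul_right_comm, ← Real.rpow_add hy, add_neg_cancel_right, Real.rpow_natCast]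
  · exact Eventually.of_forall fun y => one_mul _

lemma hasEulerDeriv_pow_mul_exp_neg_mul_sq (b : ℝ) :
    HasEulerDeriv (fun y => y ^ k * Real.exp (-b * y ^ 2)) (fun y =>
      k * (y ^ k * Real.exp (-b * y ^ 2)) - 2 * b * (y ^ (k + 2) * Real.exp (-b * y ^ 2))) := by
  intro y hy
  refine ((hasDerivAt_pow k y).fun_mul
    ((hasDerivAt_pow 2 y).const_mul (-b)).exp).congr_deriv ?_
  have hpow : y * ((k : ℝ) * y ^ (k - 1)) = k * y ^ k := by
    rcases k.eq_zero_or_pos with rfl | hk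
    · simp
    · rw [mul_left_comm, mul_pow_sub_one hk.ne']
  rw [smul_eq_mul, eq_inv_mul_iff_mul_eq₀ hy.ne']
  push_cast
  linear_combination Real.exp (-b * y ^ 2) * hpow

lemma hasMellin_exp_neg_mul_sq (hb : 0 < b) {s : ℂ} (hs : 0 < s.re) :
    HasMellin (fun y : ℝ => (Real.exp (-b * y ^ 2) : ℂ)) s
      ((b : ℂ) ^ (-s / 2) * Complex.Gamma (s / 2) / 2) := by
  have hs2 : 0 < (s / 2).re := by simpa using hs
  set F : ℝ → ℂ := fun t => (Real.exp (-t) : ℂ)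
  have hconv : MellinConvergent F (s / 2) := by
    simpa only [F, MellinConvergent, smul_eq_mul, mul_comm]
      using Complex.GammaIntegral_convergent hs2
  have hmellin : mellin F (s / 2) = Complex.Gamma (s / 2) := by
    rw [Complex.Gamma_eq_integral hs2, Complex.GammaIntegral_eq_mellin]
  have hcomp : (fun y : ℝ => (Real.exp (-b * y ^ 2) : ℂ)) =
      fun y => (fun t => F (b * t)) (y ^ (2 : ℝ)) := by
    simp only [F, Real.rpow_two, neg_mul]
  rw [hcomp]
  constructor
  · rw [MellinConvergent.comp_rpow (f := fun t => F (b * t)) two_ne_zero,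
      MellinConvergent.comp_mul_left hb, Complex.ofReal_ofNat]
    exact hconv
  · rw [mellin_comp_rpow (fun t => F (b * t)), mellin_comp_mul_left F _ hb, Complex.ofReal_ofNat,
      hmellin, smul_eq_mul, abs_two, Complex.real_smul, ← neg_div, Complex.ofReal_inv,
      Complex.ofReal_ofNat, inv_mul_eq_div]

lemma hasMellin_pow_mul_exp_neg_mul_sq (hb : 0 < b) {s : ℂ} (hs : -(k : ℝ) < s.re) :
    HasMellin (fun y : ℝ => ((y ^ k * Real.exp (-b * y ^ 2) : ℝ) : ℂ)) s
      ((b : ℂ) ^ (-(s + k) / 2) * Complex.Gamma ((s + k) / 2) / 2) := by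
  have hcpow : (fun y : ℝ => ((y ^ k * Real.exp (-b * y ^ 2) : ℝ) : ℂ)) =
      fun y : ℝ => (y : ℂ) ^ (k : ℂ) • ((Real.exp (-b * y ^ 2) : ℝ) : ℂ) := by
    ext y
    simp only [Complex.cpow_natCast, smul_eq_mul, Complex.ofReal_mul, Complex.ofReal_pow]
  have hsk : 0 < (s + k).re := by simpa [neg_lt_iff_pos_add] using hs
  obtain ⟨hconv, heq⟩ := hasMellin_exp_neg_mul_sq hb hsk
  rw [hcpow]
  exact ⟨MellinConvergent.cpow_smul.2 hconv, by rw [mellin_cpow_smul, heq]⟩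

end Gaussian

section GaussianSum

/-- The theta-like series `∑ (n y)ᵏ exp(-π (n y)²)` over `n ≥ 1`. The Euler operator maps each of
these series to a linear combination of such series, and `H` is one such combination. -/
noncomputable def gaussianSum (k : ℕ) : ℝ → ℝ :=
  dilationSum fun y => y ^ k * Real.exp (-Real.pi * y ^ 2)

variable (k : ℕ)

lemma summable_gaussianSum {y : ℝ} (hy : 0 < y) :
    Summable fun n : ℕ =>
      (((n : ℝ) + 1) * y) ^ k * Real.exp (-Real.pi * (((n : ℝ) + 1) * y) ^ 2) :=
  summable_dilate one_lt_two (isBigO_pow_mul_exp_neg_mul_sq k Real.pi_pos (by linarith)) hy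

lemma isBigO_gaussianSum {p : ℝ} (hp : 1 < p) :
    gaussianSum k =O[𝓟 (Ioi 0)] fun y => y ^ (-p) :=
  isBigO_dilationSum hp (isBigO_pow_mul_exp_neg_mul_sq k Real.pi_pos (by linarith))

lemma hasEulerDeriv_gaussianSum :
    HasEulerDeriv (gaussianSum k)
      (fun y => k * gaussianSum k y - 2 * Real.pi * gaussianSum (k + 2) y) := by
  have hO (j : ℕ) := isBigO_pow_mul_exp_neg_mul_sq j Real.pi_pos (p := 2) (by linarith)
  refine ((hasEulerDeriv_pow_mul_exp_neg_mul_sq k Real.pi).dilationSum one_lt_two (hO k)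
    (((hO k).const_mul_left _).sub ((hO (k + 2)).const_mul_left _))).congr_right fun y hy => ?_
  exact (((summable_gaussianSum k hy).mul_left _).tsum_sub
    ((summable_gaussianSum (k + 2) hy).mul_left _)).trans
      (by rw [tsum_mul_left, tsum_mul_left]; rfl)

lemma mellinConvergent_gaussianSum {s : ℂ} (hs : 1 < s.re) :
    MellinConvergent (fun y => (gaussianSum k y : ℂ)) s := by
  obtain ⟨p, hp, hps⟩ := exists_between hs
  have hO {q : ℝ} (hq : 1 < q) :
      (fun y => (gaussianSum k y : ℂ)) =O[𝓟 (Ioi 0)] fun y => y ^ (-q) :=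
    Complex.isBigO_ofReal_left.2 (isBigO_gaussianSum k hq)
  have hcont : ContinuousOn (fun y => (gaussianSum k y : ℂ)) (Ioi 0) :=
    Complex.continuous_ofReal.comp_continuousOn (hasEulerDeriv_gaussianSum k).continuousOn
  exact mellinConvergent_of_isBigO_rpow (hcont.locallyIntegrableOn measurableSet_Ioi)
    ((hO (by linarith : 1 < s.re + 1)).mono (le_principal_iff.2 (Ioi_mem_atTop 0)))
    (lt_add_one _) ((hO hp).mono inf_le_right) hps

lemma hasMellin_gaussianSum {s : ℂ} (hs : 1 < s.re) :
    HasMellin (fun y => (gaussianSum k y : ℂ)) s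
      (riemannZeta s *
        ((Real.pi : ℂ) ^ (-(s + k) / 2) * Complex.Gamma ((s + k) / 2) / 2)) := by
  obtain ⟨hconv, heq⟩ := hasMellin_pow_mul_exp_neg_mul_sq k Real.pi_pos
    (show -(k : ℝ) < s.re by linarith [k.cast_nonneg (α := ℝ)])
  have hcast : (fun y => (gaussianSum k y : ℂ)) =
      dilationSum fun y => ((y ^ k * Real.exp (-Real.pi * y ^ 2) : ℝ) : ℂ) :=
    funext fun y => Complex.ofReal_tsum _
  refine ⟨mellinConvergent_gaussianSum k hs, ?_⟩
  rw [hcast, mellin_dilationSum hs hconv, heq, smul_eq_mul]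

lemma cosKernel_zero_sq {y : ℝ} (hy : 0 < y) :
    HurwitzZeta.cosKernel 0 (y ^ 2) = 1 + 2 * gaussianSum 0 y := by
  have hsum := (summable_gaussianSum 0 hy).hasSum.mul_left 2
  have hterm (n : ℕ) :
      2 * ((((n : ℝ) + 1) * y) ^ 0 * Real.exp (-Real.pi * (((n : ℝ) + 1) * y) ^ 2)) =
        2 * Real.cos (2 * Real.pi * 0 * ((n : ℝ) + 1)) *
          Real.exp (-Real.pi * ((n : ℝ) + 1) ^ 2 * y ^ 2) := by
    simp [mul_pow, mul_assoc]
  simp only [hterm] at hsum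
  have hkernel := HurwitzZeta.hasSum_nat_cosKernel₀ 0 (pow_pos hy 2)
  exact sub_eq_iff_eq_add'.1 (hkernel.unique hsum)

lemma one_add_two_mul_gaussianSum_zero_inv {y : ℝ} (hy : 0 < y) :
    1 + 2 * gaussianSum 0 y⁻¹ = y * (1 + 2 * gaussianSum 0 y) := by
  have h := HurwitzZeta.evenKernel_functional_equation 0 (y ^ 2)
  rw [HurwitzZeta.evenKernel_eq_cosKernel_of_zero, one_div (y ^ 2), ← inv_pow,
    cosKernel_zero_sq hy, cosKernel_zero_sq (inv_pos.2 hy), ← Real.sqrt_eq_rpow,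
    Real.sqrt_sq hy.le, one_div] at h
  rw [h, mul_inv_cancel_left₀ hy.ne']

end GaussianSum

lemma isBigO_nhdsGT_zero_of_comp_inv_eq_smul {E : Type*} [NormedAddCommGroup E] [NormedSpace ℝ E]
    {f : ℝ → E} {r : ℝ} (hinv : ∀ y, 0 < y → f y⁻¹ = y • f y)
    (hf : f =O[atTop] fun y => y ^ (-(r + 1))) : f =O[𝓝[>] 0] fun y => y ^ r := by
  have hmul := (isBigO_refl (fun y : ℝ => y⁻¹) (𝓝[>] 0)).smul
    (hf.comp_tendsto tendsto_inv_nhdsGT_zero)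
  refine hmul.congr' ?_ ?_
  · filter_upwards [self_mem_nhdsWithin] with y (hy : 0 < y)
    rw [Function.comp_apply, ← hinv _ (inv_pos.2 hy), inv_inv]
  · filter_upwards [self_mem_nhdsWithin] with y (hy : 0 < y)
    rw [Function.comp_apply, Real.inv_rpow hy.le, ← Real.rpow_neg hy.le, neg_neg, smul_eq_mul,
      Real.rpow_add_one hy.ne', mul_comm, mul_inv_cancel_right₀ hy.ne']

section H

lemma H_eq_gaussianSum {y : ℝ} (hy : 0 < y) :
    H y = 8 * Real.pi ^ 2 * gaussianSum 4 y - 12 * Real.pi * gaussianSum 2 y := by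
  have hsum := ((summable_gaussianSum 4 hy).hasSum.mul_left (8 * Real.pi ^ 2)).sub
    ((summable_gaussianSum 2 hy).hasSum.mul_left (12 * Real.pi))
  rw [H, ← tsum_mul_left]
  refine (tsum_congr fun n => ?_).trans hsum.tsum_eq
  ring_nf

lemma H_inv {y : ℝ} (hy : 0 < y) : H y⁻¹ = y * H y := by
  have hθ : HasEulerDeriv (fun y => 1 + 2 * gaussianSum 0 y)
      (fun y => -(4 * Real.pi) * gaussianSum 2 y) :=
    (((hasEulerDeriv_gaussianSum 0).const_smul 2).const_add 1).congr_right fun y _ => by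
      simp only [smul_eq_mul, Nat.cast_zero]; ring
  have hθ₁ : HasEulerDeriv (fun y => -(4 * Real.pi) * gaussianSum 2 y)
      (fun y => 8 * Real.pi ^ 2 * gaussianSum 4 y - 8 * Real.pi * gaussianSum 2 y) :=
    ((hasEulerDeriv_gaussianSum 2).const_smul (-(4 * Real.pi))).congr_right fun y _ => by
      simp only [smul_eq_mul, Nat.cast_ofNat]; ring
  have hinv := hθ.add_comp_inv_of_comp_inv_eq_smul hθ₁
    (fun _ => one_add_two_mul_gaussianSum_zero_inv) hy
  rw [smul_eq_mul] at hinv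
  rw [H_eq_gaussianSum hy, H_eq_gaussianSum (inv_pos.2 hy)]
  linear_combination hinv

lemma continuousOn_H : ContinuousOn H (Ioi 0) := by
  have hcont (k : ℕ) : ContinuousOn (gaussianSum k) (Ioi 0) :=
    (hasEulerDeriv_gaussianSum k).continuousOn
  exact (((hcont 4).const_mul _).sub ((hcont 2).const_mul _)).congr fun y hy => H_eq_gaussianSum hy

lemma isBigO_H_atTop {p : ℝ} (hp : 1 < p) : H =O[atTop] fun y => y ^ (-p) := by
  have hO : H =O[𝓟 (Ioi 0)] fun y => y ^ (-p) :=
    (((isBigO_gaussianSum 4 hp).const_mul_left _).sub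
      ((isBigO_gaussianSum 2 hp).const_mul_left _)).congr'
      (eventuallyEq_principal.2 fun y hy => (H_eq_gaussianSum hy).symm) EventuallyEq.rfl
  exact hO.mono (le_principal_iff.2 (Ioi_mem_atTop 0))

lemma isBigO_H_nhdsGT_zero {p : ℝ} (hp : 0 < p) : H =O[𝓝[>] 0] fun y => y ^ p :=
  isBigO_nhdsGT_zero_of_comp_inv_eq_smul (fun _ => H_inv) (isBigO_H_atTop (by linarith))

lemma locallyIntegrableOn_H : LocallyIntegrableOn (fun y => (H y : ℂ)) (Ioi 0) :=
  (Complex.continuous_ofReal.comp_continuousOn continuousOn_H).locallyIntegrableOn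
    measurableSet_Ioi

lemma exists_isBigO_H_strip (s : ℂ) : ∃ a b : ℝ, s.re < a ∧ b < s.re ∧
    (fun y => (H y : ℂ)) =O[atTop] (fun y => y ^ (-a)) ∧
    (fun y => (H y : ℂ)) =O[𝓝[>] 0] (fun y => y ^ (-b)) := by
  obtain ⟨hneg, hpos⟩ := abs_lt.1 (lt_add_one |s.re|)
  refine ⟨|s.re| + 2, -(|s.re| + 1), by linarith, hneg, ?_, ?_⟩
  · exact Complex.isBigO_ofReal_left.2 (isBigO_H_atTop (by linarith [abs_nonneg s.re]))
  · rw [neg_neg]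
    exact Complex.isBigO_ofReal_left.2 (isBigO_H_nhdsGT_zero (by positivity))

lemma mellinConvergent_H (s : ℂ) : MellinConvergent (fun y => (H y : ℂ)) s := by
  obtain ⟨a, b, ha, hb, htop, hzero⟩ := exists_isBigO_H_strip s
  exact mellinConvergent_of_isBigO_rpow locallyIntegrableOn_H htop ha hzero hb

lemma differentiable_mellin_H : Differentiable ℂ (mellin fun y => (H y : ℂ)) := by
  intro s
  obtain ⟨a, b, ha, hb, htop, hzero⟩ := exists_isBigO_H_strip s
  exact mellin_differentiableAt_of_isBigO_rpow locallyIntegrableOn_H htop ha hzero hb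

lemma cpow_mul_Gamma_add_four_sub_add_two {s : ℂ} (hs : 0 < s.re) :
    8 * (Real.pi : ℂ) ^ 2 *
          ((Real.pi : ℂ) ^ (-(s + 4) / 2) * Complex.Gamma ((s + 4) / 2) / 2) -
        12 * Real.pi * ((Real.pi : ℂ) ^ (-(s + 2) / 2) * Complex.Gamma ((s + 2) / 2) / 2) =
      s * (s - 1) * (Real.pi : ℂ) ^ (-s / 2) * Complex.Gamma (s / 2) := by
  have hπ : (Real.pi : ℂ) ≠ 0 := Complex.ofReal_ne_zero.2 Real.pi_ne_zero
  have hs2 : s / 2 ≠ 0 := Complex.ne_zero_of_re_pos (by simpa using hs)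
  have hs2' : s / 2 + 1 ≠ 0 := Complex.ne_zero_of_re_pos (by
    rw [Complex.add_re, Complex.div_ofNat_re, Complex.one_re]
    linarith)
  have hΓ₂ : Complex.Gamma ((s + 2) / 2) = s / 2 * Complex.Gamma (s / 2) := by
    rw [← Complex.Gamma_add_one _ hs2]
    ring_nf
  have hΓ₄ : Complex.Gamma ((s + 4) / 2) = (s / 2 + 1) * (s / 2 * Complex.Gamma (s / 2)) := by
    rw [← Complex.Gamma_add_one _ hs2, ← Complex.Gamma_add_one _ hs2']
    ring_nf
  have hπ₂ : (Real.pi : ℂ) ^ (-(s + 2) / 2) = (Real.pi : ℂ) ^ (-s / 2) / Real.pi := by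
    rw [show -(s + 2) / 2 = -s / 2 - 1 by ring, Complex.cpow_sub _ _ hπ, Complex.cpow_one]
  have hπ₄ : (Real.pi : ℂ) ^ (-(s + 4) / 2) = (Real.pi : ℂ) ^ (-s / 2) / (Real.pi : ℂ) ^ 2 := by
    rw [show -(s + 4) / 2 = -s / 2 - 2 by ring, Complex.cpow_sub _ _ hπ, Complex.cpow_ofNat]
  rw [hΓ₂, hΓ₄, hπ₂, hπ₄]
  field_simp
  ring

lemma mellin_H_of_one_lt_re {s : ℂ} (hs : 1 < s.re) :
    mellin (fun y => (H y : ℂ)) s =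
      s * (s - 1) * (Real.pi : ℂ) ^ (-s / 2) * Complex.Gamma (s / 2) * riemannZeta s := by
  obtain ⟨hconv₄, heq₄⟩ := hasMellin_gaussianSum 4 hs
  obtain ⟨hconv₂, heq₂⟩ := hasMellin_gaussianSum 2 hs
  have hH : mellin (fun y => (H y : ℂ)) s = mellin (fun y =>
      (8 * (Real.pi : ℂ) ^ 2) • (gaussianSum 4 y : ℂ) -
        (12 * (Real.pi : ℂ)) • (gaussianSum 2 y : ℂ)) s := by
    refine setIntegral_congr_fun measurableSet_Ioi fun y hy => ?_
    simp [H_eq_gaussianSum hy]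
  rw [hH, (hasMellin_sub (hconv₄.const_smul _) (hconv₂.const_smul _)).2, mellin_const_smul,
    mellin_const_smul, heq₄, heq₂, smul_eq_mul, smul_eq_mul, Nat.cast_ofNat, Nat.cast_ofNat,
    ← cpow_mul_Gamma_add_four_sub_add_two (one_pos.trans hs)]
  ring

end H

lemma eq_of_differentiable_of_eq_of_lt_re {E : Type*} [NormedAddCommGroup E] [NormedSpace ℂ E]
    [CompleteSpace E] {f g : ℂ → E} (hf : Differentiable ℂ f) (hg : Differentiable ℂ g) (c : ℝ)
    (h : ∀ s : ℂ, c < s.re → f s = g s) : f = g := by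
  have hmem : {s : ℂ | c < s.re} ∈ 𝓝 ((c + 1 : ℝ) : ℂ) :=
    (isOpen_lt continuous_const Complex.continuous_re).mem_nhds (by simp)
  exact AnalyticOnNhd.eq_of_eventuallyEq (fun s _ => hf.analyticAt s) (fun s _ => hg.analyticAt s)
    (eventually_of_mem hmem h)

/-- For every complex `s`, `∫₀^∞ y^{s−1} H(y) dy` converges absolutely and equals
`2ξ(s)`, where `ξ` is the unique entire function with
`ξ(s) = (1/2) s(s−1) π^{−s/2} Γ(s/2) ζ(s)` for `Re(s) > 1`. -/
theorem mellin_H_eq_two_xi (ξ : ℂ → ℂ) (hξ : Differentiable ℂ ξ)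
    (hξ_eq : ∀ s : ℂ, 1 < s.re →
      ξ s = (1 / 2) * s * (s - 1) * (Real.pi : ℂ) ^ (-s / 2) * Complex.Gamma (s / 2) *
        riemannZeta s)
    (s : ℂ) :
    IntegrableOn (fun y : ℝ => (y : ℂ) ^ (s - 1) * (H y : ℂ)) (Set.Ioi 0) ∧
    ∫ y in Set.Ioi (0 : ℝ), (y : ℂ) ^ (s - 1) * (H y : ℂ) = 2 * ξ s := by
  refine ⟨mellinConvergent_H s, ?_⟩
  have hmellin : mellin (fun y => (H y : ℂ)) = fun z => 2 * ξ z := by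
    refine eq_of_differentiable_of_eq_of_lt_re differentiable_mellin_H (hξ.const_mul 2) 1 ?_
    intro z hz
    rw [mellin_H_of_one_lt_re hz, hξ_eq z hz]
    ring
  exact congrFun hmellin s
end

section
/- For every complex number z: sinh z = z · ∏_{n=1}^∞ (1 + z²/(n²π²)) and cosh z = ∏_{n=1}^∞ (1 + z²/((n − 1/2)²π²)), both infinite products converging. -/
/-!
Mathlib proves the sine product by integrating `cos (2 * z * x)` against powers of `cos x`. The same
works for the cosine. The weight `cos x ^ n` on `[0, π / 2]` concentrates at `0`, so the weighted
means of `cos (2 * z * x)` tend to `1`. Integrating by parts twice, the means of orders `n` and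
`n + 2` differ by the factor `1 - 4 * z ^ 2 / (n + 2) ^ 2`. Following the odd orders from `1` to
infinity writes `cos (π * z)` as a product; putting `z * I / π` for `z` makes both products
hyperbolic.
-/

section TrigonometricProducts

open Filter Real
open scoped Topology

/-- The mean of `cos (2 * z * x)` over `0 ≤ x ≤ π / 2` with respect to the weight `cos x ^ n`; the
infinite product for the cosine comes from its recursion in `n`. -/
noncomputable def cosPowMean (z : ℂ) (n : ℕ) : ℂ :=
  (∫ x in (0 : ℝ)..π / 2, Complex.cos (2 * z * x) * (cos x : ℂ) ^ n) /
    (∫ x in (0 : ℝ)..π / 2, cos x ^ n : ℝ)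

lemma integral_cos_pow_add_two (n : ℕ) :
    ∫ x in (0 : ℝ)..π / 2, cos x ^ (n + 2) =
      (n + 1) / (n + 2) * ∫ x in (0 : ℝ)..π / 2, cos x ^ n := by
  simp [integral_cos_pow]

lemma cosPowMean_zero_left (n : ℕ) : cosPowMean 0 n = 1 := by
  have weight_ne_zero : ((∫ x in (0 : ℝ)..π / 2, cos x ^ n : ℝ) : ℂ) ≠ 0 :=
    Complex.ofReal_ne_zero.mpr (EulerSine.integral_cos_pow_pos n).ne'
  rw [cosPowMean, div_eq_one_iff_eq weight_ne_zero, ← intervalIntegral.integral_ofReal]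
  simp

lemma mul_cosPowMean_add_two (z : ℂ) (n : ℕ) :
    (1 - 4 * z ^ 2 / ((n : ℂ) + 2) ^ 2) * cosPowMean z (n + 2) = cosPowMean z n := by
  rcases eq_or_ne z 0 with rfl | hz
  · simp [cosPowMean_zero_left]
  have recursion := EulerSine.integral_cos_mul_cos_pow (Nat.le_add_left 2 n) hz
  rw [Nat.add_sub_cancel, Nat.cast_add, Nat.cast_two] at recursion
  have ratio_ne_zero : ((n : ℂ) + 1) / (n + 2) ≠ 0 :=
    div_ne_zero (mod_cast n.succ_ne_zero) (mod_cast (n + 1).succ_ne_zero)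
  rw [cosPowMean, cosPowMean, ← mul_div_assoc, recursion, integral_cos_pow_add_two]
  push_cast
  rw [show (n : ℂ) + 2 - 1 = n + 1 by ring, mul_div_mul_left _ _ ratio_ne_zero]

lemma mul_cosPowMean_one (z : ℂ) : (1 - 4 * z ^ 2) * cosPowMean z 1 = Complex.cos (π * z) := by
  have antideriv (x : ℝ) : HasDerivAt
      (fun y : ℝ ↦ Complex.sin y * Complex.cos (2 * z * y)
        - 2 * z * (Complex.cos y * Complex.sin (2 * z * y)))
      ((1 - 4 * z ^ 2) * (Complex.cos (2 * z * x) * Complex.cos x)) x := by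
    have linear_deriv : HasDerivAt (fun w : ℂ ↦ 2 * z * w) (2 * z) (x : ℂ) := by
      simpa using (hasDerivAt_id (x : ℂ)).const_mul (2 * z)
    have derivative := ((Complex.hasDerivAt_sin x).fun_mul linear_deriv.ccos).fun_sub
      (((Complex.hasDerivAt_cos x).fun_mul linear_deriv.csin).const_mul (2 * z))
    exact (derivative.congr_deriv (by ring)).comp_ofReal
  have integral_eq : ∫ x in (0 : ℝ)..π / 2,
      (1 - 4 * z ^ 2) * (Complex.cos (2 * z * x) * Complex.cos x) = Complex.cos (π * z) := by
    rw [intervalIntegral.integral_eq_sub_of_hasDerivAt (fun x _ ↦ antideriv x)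
      (Continuous.intervalIntegrable (by fun_prop) _ _)]
    simp [show 2 * z * (π / 2 : ℂ) = π * z by ring]
  simpa [cosPowMean] using integral_eq

lemma tendsto_cosPowMean (z : ℂ) : Tendsto (cosPowMean z) atTop (𝓝 1) := by
  have concentration := EulerSine.tendsto_integral_cos_pow_mul_div
    (f := fun x ↦ Complex.cos (2 * z * x)) (by fun_prop)
  unfold cosPowMean
  simpa [mul_comm] using concentration

lemma prod_mul_cosPowMean (z : ℂ) (n : ℕ) :
    (∏ j ∈ Finset.range (n + 1), (1 - z ^ 2 / ((j : ℂ) + 1 / 2) ^ 2)) * cosPowMean z (2 * n + 1) =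
      Complex.cos (π * z) := by
  have factor_eq (j : ℕ) :
      1 - z ^ 2 / ((j : ℂ) + 1 / 2) ^ 2 = 1 - 4 * z ^ 2 / (2 * (j : ℂ) + 1) ^ 2 := by
    rw [show 2 * (j : ℂ) + 1 = 2 * (j + 1 / 2) by ring, mul_pow, show (4 : ℂ) = 2 ^ 2 by norm_num,
      mul_div_mul_left _ _ (by norm_num)]
  simp only [factor_eq]
  induction n with
  | zero => simpa using mul_cosPowMean_one z
  | succ n ih =>
    have recursion := mul_cosPowMean_add_two z (2 * n + 1)
    rw [show ((2 * n + 1 : ℕ) : ℂ) + 2 = 2 * ((n + 1 : ℕ) : ℂ) + 1 by push_cast; ring] at recursion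
    rw [Finset.prod_range_succ, mul_assoc, mul_add_one, add_right_comm, recursion, ih]

theorem tendsto_euler_cos_prod (z : ℂ) :
    Tendsto (fun n : ℕ ↦ ∏ j ∈ Finset.range n, (1 - z ^ 2 / ((j : ℂ) + 1 / 2) ^ 2)) atTop
      (𝓝 (Complex.cos (π * z))) := by
  rw [← tendsto_add_atTop_iff_nat 1]
  have odd_atTop : Tendsto (fun n : ℕ ↦ 2 * n + 1) atTop atTop :=
    tendsto_atTop_mono (fun n ↦ show n ≤ 2 * n + 1 by lia) tendsto_id
  have mean_tendsto : Tendsto (fun n : ℕ ↦ cosPowMean z (2 * n + 1)) atTop (𝓝 1) :=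
    (tendsto_cosPowMean z).comp odd_atTop
  refine (tendsto_mul_iff_of_ne_zero mean_tendsto one_ne_zero).mp ?_
  simp only [prod_mul_cosPowMean, mul_one, tendsto_const_nhds]

lemma multipliable_one_sub_div_nat_add_sq (w a : ℂ) :
    Multipliable fun n : ℕ ↦ 1 - w / ((n : ℂ) + a) ^ 2 := by
  have summable_inv_sq : Summable fun n : ℕ ↦ (((n : ℂ) + a) ^ 2)⁻¹ := by
    simpa [Function.comp_def, add_comm] using
      (EisensteinSeries.linear_right_summable a 1 le_rfl).comp_injective Nat.cast_injective
  simpa [sub_eq_add_neg, div_eq_mul_inv] using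
    Complex.multipliable_one_add_of_summable (summable_inv_sq.mul_left (-w))

theorem sin_pi_mul_eq_mul_tprod (z : ℂ) :
    Complex.sin (π * z) = π * z * ∏' n : ℕ, (1 - z ^ 2 / ((n : ℂ) + 1) ^ 2) :=
  tendsto_nhds_unique (Complex.tendsto_euler_sin_prod z)
    ((multipliable_one_sub_div_nat_add_sq (z ^ 2) 1).tendsto_prod_tprod_nat.const_mul (π * z))

theorem cos_pi_mul_eq_tprod (z : ℂ) :
    Complex.cos (π * z) = ∏' n : ℕ, (1 - z ^ 2 / ((n : ℂ) + 1 / 2) ^ 2) :=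
  tendsto_nhds_unique (tendsto_euler_cos_prod z)
    (multipliable_one_sub_div_nat_add_sq (z ^ 2) (1 / 2)).tendsto_prod_tprod_nat

end TrigonometricProducts

section HyperbolicProducts

open Real

lemma pi_mul_mul_I_div_pi (z : ℂ) : π * (z * Complex.I / π) = z * Complex.I :=
  mul_div_cancel₀ _ (Complex.ofReal_ne_zero.mpr pi_ne_zero)

lemma one_sub_mul_I_div_pi_sq_div (z a : ℂ) :
    1 - (z * Complex.I / π) ^ 2 / a ^ 2 = 1 + z ^ 2 / (a ^ 2 * π ^ 2) := by
  rw [div_pow, mul_pow, Complex.I_sq, div_div, mul_comm (a ^ 2)]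
  ring

theorem multipliable_one_add_sq_div_nat_add_sq_mul_pi_sq (z a : ℂ) :
    Multipliable fun n : ℕ ↦ 1 + z ^ 2 / (((n : ℂ) + a) ^ 2 * (π : ℂ) ^ 2) :=
  (multipliable_one_sub_div_nat_add_sq ((z * Complex.I / π) ^ 2) a).congr
    fun n ↦ one_sub_mul_I_div_pi_sq_div z (n + a)

theorem sinh_eq_mul_tprod (z : ℂ) :
    Complex.sinh z = z * ∏' n : ℕ, (1 + z ^ 2 / (((n : ℂ) + 1) ^ 2 * (π : ℂ) ^ 2)) := by
  have sin_product := sin_pi_mul_eq_mul_tprod (z * Complex.I / π)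
  simp only [pi_mul_mul_I_div_pi, one_sub_mul_I_div_pi_sq_div, Complex.sin_mul_I] at sin_product
  rw [mul_right_comm] at sin_product
  exact mul_right_cancel₀ Complex.I_ne_zero sin_product

theorem cosh_eq_tprod (z : ℂ) :
    Complex.cosh z = ∏' n : ℕ, (1 + z ^ 2 / (((n : ℂ) + 1 / 2) ^ 2 * (π : ℂ) ^ 2)) := by
  simpa only [pi_mul_mul_I_div_pi, one_sub_mul_I_div_pi_sq_div, Complex.cos_mul_I] using
    cos_pi_mul_eq_tprod (z * Complex.I / π)

end HyperbolicProducts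

/-- Euler's product formulae:
`sinh z = z ∏_{n=1}^∞ (1 + z²/(n²π²))` and
`cosh z = ∏_{n=1}^∞ (1 + z²/((n − 1/2)²π²))`, both products converging. -/
theorem euler_products (z : ℂ) :
    (Multipliable fun n : ℕ => 1 + z ^ 2 / (((n : ℂ) + 1) ^ 2 * (Real.pi : ℂ) ^ 2)) ∧
    Complex.sinh z = z * ∏' n : ℕ, (1 + z ^ 2 / (((n : ℂ) + 1) ^ 2 * (Real.pi : ℂ) ^ 2)) ∧
    (Multipliable fun n : ℕ =>
      1 + z ^ 2 / ((((n : ℂ) + 1) - 1 / 2) ^ 2 * (Real.pi : ℂ) ^ 2)) ∧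
    Complex.cosh z
      = ∏' n : ℕ, (1 + z ^ 2 / ((((n : ℂ) + 1) - 1 / 2) ^ 2 * (Real.pi : ℂ) ^ 2)) := by
  have shift (n : ℕ) : (n : ℂ) + 1 - 1 / 2 = n + 1 / 2 := by ring
  simp only [shift]
  exact ⟨multipliable_one_add_sq_div_nat_add_sq_mul_pi_sq z 1, sinh_eq_mul_tprod z,
    multipliable_one_add_sq_div_nat_add_sq_mul_pi_sq z (1 / 2), cosh_eq_tprod z⟩
end
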